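/- Let n ≥ 2 and let f : {0,1}^n → {0,1} be a local rule of width n. If f is L-conservative for L = 2n−2, then f is conservative, i.e. f is L-conservative for every integer L > 0. -/

import Mathlib

/-- A local rule `f` of width `n` is `L`-conservative if for every `L`-periodic
bisequence `x : ℤ → Fin 2`, the sum of `f` applied to the `n`-blocks starting at
positions `1,…,L` equals the sum of `x` over positions `1,…,L`. -/
def LCons (n : ℕ) (f : (Fin n → Fin 2) → Fin 2) (L : ℕ) : Prop :=
  ∀ x : ℤ → Fin 2, (∀ i : ℤ, x (i + L) = x i) →
    (∑ i ∈ Finset.range L, (f (fun k => x ((i : ℤ) + 1 + (k : ℕ)))).val) =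
      ∑ i ∈ Finset.range L, (x ((i : ℤ) + 1)).val

/-!
Call a function of a bisequence *null* for a period if its translates over one period sum to zero
on every bisequence of that period; conservation says that `f(x₀, …, xₙ₋₁) - x₀` is null. Let `φ`
depend on `x₀, …, xₙ` and be null for a period `M ≥ 2n`. Evaluate it on the word `a x₁ ⋯ xₙ₋₁ b`
followed by `M - n - 1` zeros and take the mixed second difference in the two letters `a` and `b`.
Only windows that see both letters survive: the word itself and, if `M = 2n`, the window
`b 0 ⋯ 0 a` that wraps around the cycle. Taking `x = 0` first gives twice the mixed difference at
`0`, so all mixed differences vanish. Over a two-letter alphabet this splits `φ` as a function of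
`x₀, …, xₙ₋₁` plus a function of `x₁, …, xₙ`; translating the latter by one position leaves all sums
over a period unchanged and shortens the window, so induction on the width applies.
-/

namespace Bisequence

open Function

section PeriodSums

variable {α G : Type*}

/-- The bisequence `x` translated so that position `i` becomes the origin. -/
def shift (i : ℤ) (x : ℤ → α) : ℤ → α := fun j => x (j + i)

lemma shift_shift (i j : ℤ) (x : ℤ → α) : shift i (shift j x) = shift (i + j) x := by
  ext k
  simp only [shift, add_assoc]

lemma shift_zero (x : ℤ → α) : shift 0 x = x := by
  ext k
  simp only [shift, add_zero]

lemma shift_const (i : ℤ) (a : α) : shift i (const ℤ a) = const ℤ a :=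
  rfl

lemma shift_eq_self {L : ℤ} {x : ℤ → α} (hx : Periodic x L) : shift L x = x :=
  hx.funext

/-- The sum of `φ` over the translates of `x` along one period `L`. -/
def periodSum [AddCommMonoid G] (L : ℕ) (φ : (ℤ → α) → G) (x : ℤ → α) : G :=
  ∑ i ∈ Finset.range L, φ (shift i x)

lemma periodSum_add [AddCommMonoid G] (L : ℕ) (φ ψ : (ℤ → α) → G) (x : ℤ → α) :
    periodSum L (fun y => φ y + ψ y) x = periodSum L φ x + periodSum L ψ x :=
  Finset.sum_add_distrib

lemma periodSum_comp_shift [AddCommMonoid G] (L : ℕ) (φ : (ℤ → α) → G) (i : ℤ) (x : ℤ → α) :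
    periodSum L (fun y => φ (shift i y)) x = periodSum L φ (shift i x) := by
  simp only [periodSum, shift_shift, add_comm]

lemma periodSum_shift_one [AddCommMonoid G] {L : ℕ} (φ : (ℤ → α) → G) {x : ℤ → α}
    (hx : Periodic x L) : periodSum L φ (shift 1 x) = periodSum L φ x := by
  cases L with
  | zero => rfl
  | succ L =>
    simp only [periodSum, shift_shift, ← Nat.cast_succ]
    rw [Finset.sum_range_succ, Finset.sum_range_succ' (fun i : ℕ => φ (shift i x)),
      shift_eq_self hx, Nat.cast_zero, shift_zero]

/-- An observable is null for the period `L` if its sum over one period of any `L`-periodic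
bisequence vanishes. -/
def IsNull [AddCommMonoid G] (L : ℕ) (φ : (ℤ → α) → G) : Prop :=
  ∀ x : ℤ → α, Periodic x L → periodSum L φ x = 0

lemma isNull_add_comp_shift_one_iff [AddCommMonoid G] {L : ℕ} (u v : (ℤ → α) → G) :
    IsNull L (fun x => u x + v (shift 1 x)) ↔ IsNull L (fun x => u x + v x) := by
  refine forall₂_congr fun x hx => ?_
  rw [periodSum_add, periodSum_add, periodSum_comp_shift, periodSum_shift_one v hx]

lemma IsNull.eq_zero_of_dependsOn_singleton [AddCommMonoid G] [IsAddTorsionFree G] {M : ℕ}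
    {φ : (ℤ → α) → G} (hM : M ≠ 0) (hφ : DependsOn φ {0}) (hnull : IsNull M φ) : φ = 0 := by
  ext x
  have hconst : M • φ (const ℤ (x 0)) = 0 := by
    simpa only [periodSum, shift_const, Finset.sum_const, Finset.card_range] using
      hnull (const ℤ (x 0)) fun _ => rfl
  calc φ x = φ (const ℤ (x 0)) := hφ (by simp)
    _ = 0 := (nsmul_eq_zero_iff_right hM).1 hconst

end PeriodSums

section MixedDifference

variable {G : Type*} [AddCommGroup G]

/-- The mixed second difference of a function of two binary letters. -/
def mixedDifference (F : Fin 2 → Fin 2 → G) : G :=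
  F 1 1 - F 1 0 - F 0 1 + F 0 0

lemma mixedDifference_sum {ι : Type*} (s : Finset ι) (F : ι → Fin 2 → Fin 2 → G) :
    mixedDifference (fun a b => ∑ i ∈ s, F i a b) = ∑ i ∈ s, mixedDifference (F i) := by
  simp only [mixedDifference, Finset.sum_add_distrib, Finset.sum_sub_distrib]

lemma mixedDifference_swap (F : Fin 2 → Fin 2 → G) :
    mixedDifference (fun a b => F b a) = mixedDifference F := by
  simp only [mixedDifference]
  abel

lemma mixedDifference_eq_zero_of_left {F : Fin 2 → Fin 2 → G} (hF : ∀ a a' b, F a b = F a' b) :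
    mixedDifference F = 0 := by
  simp [mixedDifference, hF 1 0]

lemma mixedDifference_eq_zero_of_right {F : Fin 2 → Fin 2 → G} (hF : ∀ a b b', F a b = F a b') :
    mixedDifference F = 0 := by
  simp [mixedDifference, fun a => hF a 1 0]

lemma eq_add_of_mixedDifference_eq_zero {F : Fin 2 → Fin 2 → G} (hF : mixedDifference F = 0)
    (a b : Fin 2) : F a b = F a 0 + (F 0 b - F 0 0) := by
  have hcorner : F 1 1 = F 1 0 + (F 0 1 - F 0 0) := by
    rw [← sub_eq_zero, ← hF, mixedDifference]
    abel
  fin_cases a <;> fin_cases b <;> simp [hcorner]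

end MixedDifference

section CyclicWord

lemma emod_eq_ite_of_lt_two_mul {k M : ℤ} (hk : 0 ≤ k) (hkM : k < 2 * M) :
    k % M = if k < M then k else k - M := by
  split_ifs with h
  · exact Int.emod_eq_of_lt hk h
  · rw [← Int.sub_emod_right, Int.emod_eq_of_lt (by lia) (by lia)]

variable {α G : Type*}

/-- The bisequence `x` with the letters `a` and `b` written at positions `0` and `n`. -/
def withEnds (n : ℕ) (x : ℤ → α) (a b : α) : ℤ → α :=
  update (update x 0 a) n b

lemma withEnds_apply (n : ℕ) (x : ℤ → α) (a b : α) (j : ℤ) :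
    withEnds n x a b j = if j = n then b else if j = 0 then a else x j := by
  simp only [withEnds, update_apply]

variable [Zero α] {M n : ℕ} {φ : (ℤ → α) → G}

/-- The `M`-periodic bisequence with period block `a x₁ ⋯ xₙ₋₁ b 0 ⋯ 0`, the `a` being at
position `0`. -/
def cyclicWord (M n : ℕ) (x : ℤ → α) (a b : α) : ℤ → α :=
  fun j => withEnds n (fun k => if k < n then x k else 0) a b (j % M)

lemma periodic_cyclicWord (M n : ℕ) (x : ℤ → α) (a b : α) :
    Periodic (cyclicWord M n x a b) M := fun j => by
  simp only [cyclicWord, Int.add_emod_right]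

lemma apply_cyclicWord (hφ : DependsOn φ (Set.Icc 0 n)) (hM : n < M) (x : ℤ → α)
    (a b : α) : φ (cyclicWord M n x a b) = φ (withEnds n x a b) := by
  refine hφ fun j hj => ?_
  rw [cyclicWord, Int.emod_eq_of_lt hj.1 (by grind)]
  simp only [withEnds_apply]
  grind

lemma apply_shift_cyclicWord_wrap (hφ : DependsOn φ (Set.Icc 0 n)) (hn : n ≠ 0) (x : ℤ → α)
    (a b : α) :
    φ (shift n (cyclicWord (2 * n) n x a b)) = φ (withEnds n (fun _ => 0) b a) := by
  refine hφ fun j hj => ?_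
  rw [shift, cyclicWord, emod_eq_ite_of_lt_two_mul (by grind) (by grind)]
  simp only [withEnds_apply]
  grind

end CyclicWord

section NullObservables

variable {M n : ℕ} {G : Type*} [AddCommGroup G] {φ : (ℤ → Fin 2) → G}

/-- The window `[i, i + n]` meets both residues `0` and `n` modulo `M` only if `i = 0`, or `i = n`
and `M = 2n`. -/
lemma mixedDifference_shift_cyclicWord (hφ : DependsOn φ (Set.Icc 0 n)) (hM : 2 * n ≤ M)
    (x : ℤ → Fin 2) {i : ℕ} (hi : i ≠ 0) (hiM : i < M) (hwrap : i = n → M ≠ 2 * n) :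
    mixedDifference (fun a b => φ (shift i (cyclicWord M n x a b))) = 0 := by
  have hmod (j : ℤ) (hj : j ∈ Set.Icc (0 : ℤ) n) :=
    emod_eq_ite_of_lt_two_mul (k := j + i) (M := M) (by grind) (by grind)
  obtain hlt | hlt : i + n < M ∨ n < i := by lia
  · refine mixedDifference_eq_zero_of_left fun a a' b => hφ fun j hj => ?_
    have hne : (j + i) % M ≠ 0 := by grind
    simp only [shift, cyclicWord, withEnds_apply, hne, if_false]
  · refine mixedDifference_eq_zero_of_right fun a b b' => hφ fun j hj => ?_
    have hne : (j + i) % M ≠ n := by grind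
    simp only [shift, cyclicWord, withEnds_apply, hne, if_false]

lemma IsNull.sum_mixedDifference_cyclicWord (hnull : IsNull M φ) (n : ℕ) (x : ℤ → Fin 2) :
    ∑ i ∈ Finset.range M, mixedDifference (fun a b => φ (shift i (cyclicWord M n x a b))) = 0 := by
  have hzero (a b : Fin 2) := hnull _ (periodic_cyclicWord M n x a b)
  rw [← mixedDifference_sum]
  simp only [periodSum] at hzero
  simp only [mixedDifference, hzero, sub_self, add_zero]

lemma IsNull.mixedDifference_add_mixedDifference_zero (hφ : DependsOn φ (Set.Icc 0 n))
    (hn : n ≠ 0) (hnull : IsNull (2 * n) φ) (x : ℤ → Fin 2) :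
    mixedDifference (fun a b => φ (withEnds n x a b)) +
      mixedDifference (fun a b => φ (withEnds n (fun _ => 0) a b)) = 0 := by
  rw [← mixedDifference_swap fun a b => φ (withEnds n (fun _ => 0) a b),
    ← hnull.sum_mixedDifference_cyclicWord n x,
    Finset.sum_eq_add_of_mem 0 n (Finset.mem_range.2 (by lia))
      (Finset.mem_range.2 (by lia)) hn.symm]
  · simp only [Nat.cast_zero, shift_zero, apply_cyclicWord hφ (show n < 2 * n by lia),
      apply_shift_cyclicWord_wrap hφ hn]
  · intro i hi hne
    exact mixedDifference_shift_cyclicWord hφ le_rfl x hne.1 (Finset.mem_range.1 hi)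
      fun h => absurd h hne.2

lemma IsNull.mixedDifference_eq_zero [IsAddTorsionFree G] (hφ : DependsOn φ (Set.Icc 0 n))
    (hn : n ≠ 0) (hM : 2 * n ≤ M) (hnull : IsNull M φ) (x : ℤ → Fin 2) :
    mixedDifference (fun a b => φ (withEnds n x a b)) = 0 := by
  obtain rfl | hlt := hM.eq_or_lt
  · have hbase : mixedDifference (fun a b => φ (withEnds n (fun _ => 0) a b)) = 0 :=
      self_eq_neg.1 (eq_neg_of_add_eq_zero_left <|
        hnull.mixedDifference_add_mixedDifference_zero hφ hn _)
    simpa only [hbase, add_zero] using hnull.mixedDifference_add_mixedDifference_zero hφ hn x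
  · rw [← hnull.sum_mixedDifference_cyclicWord n x, Finset.sum_eq_single_of_mem 0
      (Finset.mem_range.2 (by lia))]
    · simp only [Nat.cast_zero, shift_zero, apply_cyclicWord hφ (show n < M by lia)]
    · intro i hi hi0
      exact mixedDifference_shift_cyclicWord hφ hM x hi0 (Finset.mem_range.1 hi)
        fun _ => hlt.ne'

end NullObservables

section Reduction

variable {M n : ℕ} {G : Type*} [AddCommGroup G] [IsAddTorsionFree G] {φ : (ℤ → Fin 2) → G}

lemma IsNull.exists_eq_add_comp_shift_one (hφ : DependsOn φ (Set.Icc 0 (n + 1 : ℕ)))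
    (hM : 2 * (n + 1) ≤ M) (hnull : IsNull M φ) :
    ∃ u v : (ℤ → Fin 2) → G, DependsOn u (Set.Icc 0 n) ∧ DependsOn v (Set.Icc 0 n) ∧
      φ = fun x => u x + v (shift 1 x) := by
  refine ⟨fun x => φ (update x (n + 1 : ℕ) 0),
    fun x => φ (update (shift (-1) x) 0 0) - φ (withEnds (n + 1) (shift (-1) x) 0 0), ?_, ?_, ?_⟩
  · intro (x : ℤ → Fin 2) (y : ℤ → Fin 2) hxy
    refine hφ fun j hj => ?_
    simp only [update_apply]
    grind
  · intro (x : ℤ → Fin 2) (y : ℤ → Fin 2) hxy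
    have hshift (j : ℤ) (hj : j ∈ Set.Icc (0 : ℤ) (n + 1 : ℕ)) (hj0 : j ≠ 0) :
        shift (-1) x j = shift (-1) y j := hxy _ (by grind)
    refine congrArg₂ (· - ·) (hφ fun j hj => ?_) (hφ fun j hj => ?_)
    · simp only [update_apply]
      grind
    · simp only [withEnds_apply]
      grind
  · ext x
    have hsplit := eq_add_of_mixedDifference_eq_zero
      (hnull.mixedDifference_eq_zero hφ n.succ_ne_zero hM x) (x 0) (x (n + 1 : ℕ))
    have hright : update x 0 0 ((n + 1 : ℕ) : ℤ) = x (n + 1 : ℕ) :=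
      update_of_ne (by lia) _ _
    have hends : withEnds (n + 1) x 0 (x (n + 1 : ℕ)) = update x 0 0 := by
      rw [withEnds, ← hright, update_eq_self]
    rw [hends] at hsplit
    simpa only [withEnds, update_eq_self, shift_shift, neg_add_cancel, shift_zero] using hsplit

theorem IsNull.of_two_mul_le (hφ : DependsOn φ (Set.Icc 0 n)) (hM0 : M ≠ 0) (hM : 2 * n ≤ M)
    (hnull : IsNull M φ) (L : ℕ) : IsNull L φ := by
  induction n generalizing φ with
  | zero =>
    have hzero : φ = 0 :=
      hnull.eq_zero_of_dependsOn_singleton hM0 (by simpa using hφ)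
    exact fun x _ => by simp [periodSum, hzero]
  | succ n ih =>
    obtain ⟨u, v, hu, hv, rfl⟩ := hnull.exists_eq_add_comp_shift_one hφ hM
    rw [isNull_add_comp_shift_one_iff] at hnull ⊢
    exact ih (fun x y hxy => by simp only [hu hxy, hv hxy]) (by lia) hnull

end Reduction

section LocalRule

variable {n : ℕ}

/-- The local excess of a rule over the identity: the output of `f` on the block starting at the
origin minus the letter at the origin. -/
def excess (f : (Fin n → Fin 2) → Fin 2) (x : ℤ → Fin 2) : ℤ :=
  (f fun k => x (k : ℕ)).val - (x 0).val

lemma dependsOn_excess (f : (Fin n → Fin 2) → Fin 2) :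
    DependsOn (excess f) (Set.Icc 0 (n - 1 : ℕ)) := fun x y hxy => by
  have hblock : (fun k : Fin n => x (k : ℕ)) = fun k : Fin n => y (k : ℕ) :=
    funext fun k => hxy _ (by grind)
  rw [excess, excess, hblock, hxy 0 (by simp)]

lemma periodSum_excess_shift_one (f : (Fin n → Fin 2) → Fin 2) (L : ℕ) (x : ℤ → Fin 2) :
    periodSum L (excess f) (shift 1 x) =
      ((∑ i ∈ Finset.range L, (f (fun k => x ((i : ℤ) + 1 + (k : ℕ)))).val : ℕ) : ℤ) -
        (∑ i ∈ Finset.range L, (x ((i : ℤ) + 1)).val : ℕ) := by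
  simp only [periodSum, excess, shift, Finset.sum_sub_distrib, Nat.cast_sum,
    add_zero, add_assoc, add_comm, add_left_comm]

theorem lCons_iff_isNull_excess (f : (Fin n → Fin 2) → Fin 2) (L : ℕ) :
    LCons n f L ↔ IsNull L (excess f) := by
  refine forall₂_congr fun x hx => ?_
  rw [← periodSum_shift_one _ hx, periodSum_excess_shift_one, sub_eq_zero, Nat.cast_inj]

end LocalRule

end Bisequence

open Bisequence in
theorem stmt_0_general {n M : ℕ} (hM0 : M ≠ 0) (hM : 2 * n - 2 ≤ M)
    (f : (Fin n → Fin 2) → Fin 2) (h : LCons n f M) (L : ℕ) : LCons n f L := by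
  rw [lCons_iff_isNull_excess] at h ⊢
  exact h.of_two_mul_le (dependsOn_excess f) hM0 (by lia) L

/-- If a local rule of width `n ≥ 2` is `(2n-2)`-conservative, then it is
`L`-conservative for every `L > 0`. -/
theorem stmt_0 (n : ℕ) (hn : 2 ≤ n) (f : (Fin n → Fin 2) → Fin 2)
    (h : LCons n f (2 * n - 2)) :
    ∀ L : ℕ, 0 < L → LCons n f L :=
  fun L _ => stmt_0_general (by lia) le_rfl f h L
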